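/- Let n ≥ 3 and let 𝒜 = {[A₁],…,[A_r]} be a malnormal subgroup system of F_n with r ≥ 1, with L, Γ_i, 𝒞 and S_k as in the context. Then for every integer k ≥ 1, the set S_k is nonempty: there exists w ∈ F_n with |w| = k whose reduced word does not contain the reduced word of any element of 𝒞 as a contiguous subword. -/

import Mathlib

/-!
The word is periodic. Since `1 ∈ T_{A₀}`, some nontrivial `a ∈ A₀` has minimal length in its
conjugacy class. Its reduced word `l` is then cyclically reduced (`isCyclicallyReduced_of_min`),
so `l ⋯ l` (`k` copies) is reduced, and `w` is taken to be its prefix of length `k`.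

If `q` is a prefix of `l ⋯ l`, then `q⁻¹ a q` is represented by a cyclic rotation of `l`, hence has
length at most `|l|` (`wlen_conj_prefix_le`): the prefixes of `w` all lie on the axis of `a`. Given a
subword `x` of `w`, say `w = s x t`, translating by `s⁻¹` puts the path `γ_x` on the axis of
`s⁻¹ a s`, which lies in the conjugate `s⁻¹ A₀ s` of `A₀`. The tree of that conjugate contains `1`
and `γ_x`, so `x ∉ 𝒞`.
-/

open scoped Classical
open MeasureTheory

noncomputable section

namespace RelCurr

/-- The alphabet `𝔄 = ℬ ∪ ℬ⁻¹`: a letter is a generator together with a sign. -/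
abbrev Letter (n : ℕ) := Fin n × Bool

/-- The inverse of a letter. -/
def linv {n : ℕ} (x : Letter n) : Letter n := (x.1, !x.2)

/-- The free group of rank `n` on the basis `Fin n`. -/
abbrev F (n : ℕ) := FreeGroup (Fin n)

/-- The reduced word of an element of `F n`. -/
def rword {n : ℕ} (g : F n) : List (Letter n) := FreeGroup.toWord g

/-- The length `|g|` of the reduced word of `g`. -/
def wlen {n : ℕ} (g : F n) : ℕ := (rword g).length

/-- The single-letter element of `F n` given by a letter. -/
def letterE {n : ℕ} (b : Letter n) : F n := FreeGroup.mk [b]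

/-- The conjugate subgroup `g A g⁻¹`. -/
def conjSub {n : ℕ} (g : F n) (A : Subgroup (F n)) : Subgroup (F n) :=
  Subgroup.map (MulAut.conj g).toMonoidHom A

/-- A subgroup `A` is malnormal if `xAx⁻¹ ∩ A = {1}` for every `x ∉ A`. -/
def Malnormal {n : ℕ} (A : Subgroup (F n)) : Prop :=
  ∀ x : F n, x ∉ A → conjSub x A ⊓ A = ⊥

/-- The word metric on the Cayley tree `T`. -/
def dist' {n : ℕ} (x y : F n) : ℕ := wlen (x⁻¹ * y)

/-- The cyclically reduced length of `a`. -/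
def cycLen {n : ℕ} (a : F n) : ℕ := sInf { m | ∃ h : F n, wlen (h⁻¹ * a * h) = m }

/-- The vertex set of the minimal `A`-invariant subtree `T_A` of the Cayley tree:
the union of the axes of the nontrivial elements of `A`. -/
def treeVerts {n : ℕ} (A : Subgroup (F n)) : Set (F n) :=
  { h | ∃ a ∈ A, a ≠ 1 ∧ wlen (h⁻¹ * a * h) = cycLen a }

/-- `γ_w ⊆ S`: every prefix of the reduced word of `w` lies in the vertex set `S`. -/
def pathIn {n : ℕ} (w : F n) (S : Set (F n)) : Prop :=
  ∀ m ≤ wlen w, FreeGroup.mk ((rword w).take m) ∈ S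

/-- An element is cyclically reduced if the last letter of its reduced word is not the
inverse of the first letter. -/
def CyclicallyReduced {n : ℕ} (w : F n) : Prop :=
  ∀ x y : Letter n, (rword w).head? = some x → (rword w).getLast? = some y → y ≠ linv x

/-- `v` is a length-one extension of `w`. -/
def LengthOneExt {n : ℕ} (w v : F n) : Prop :=
  ∃ b : Letter n, v = w * letterE b ∧ wlen v = wlen w + 1

/-- `a` is an extension of `w`: the reduced word of `w` is a proper prefix of that of `a`. -/
def ExtensionOf {n : ℕ} (w a : F n) : Prop :=
  rword w <+: rword a ∧ wlen w < wlen a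

/-- `g` is a proper power. -/
def IsProperPower {n : ℕ} (g : F n) : Prop := ∃ (h : F n) (k : ℕ), 2 ≤ k ∧ g = h ^ k

section System

variable {n r : ℕ} (A : Fin r → Subgroup (F n))

/-- `[B] ∈ 𝒜`, i.e. `B` is a conjugate of one of the subgroups of the system. -/
def InSystem (B : Subgroup (F n)) : Prop := ∃ (i : Fin r) (g : F n), B = conjSub g (A i)

/-- The family `A` represents a subgroup system: finite rank subgroups distinct
from `{1}` and `F n`. -/
def IsSystem : Prop := (∀ i, (A i).FG) ∧ (∀ i, A i ≠ ⊥) ∧ (∀ i, A i ≠ ⊤)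

/-- The subgroup system is malnormal. -/
def SystemMalnormal : Prop :=
  (∀ i, Malnormal (A i)) ∧
  ∀ B₁ B₂ : Subgroup (F n), InSystem A B₁ → InSystem A B₂ → B₁ ≠ B₂ → B₁ ⊓ B₂ = ⊥

/-- `g` is `𝒜`-peripheral: trivial or contained in a conjugate of one of the `A i`. -/
def Peripheral (g : F n) : Prop := g = 1 ∨ ∃ B, InSystem A B ∧ g ∈ B

/-- The diameter of the intersection of the trees of two distinct subgroups of the
system is at most `L`. -/
def DiamBound (L : ℕ) : Prop :=
  ∀ B₁ B₂ : Subgroup (F n), InSystem A B₁ → InSystem A B₂ → B₁ ≠ B₂ →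
    ∀ x ∈ treeVerts B₁ ∩ treeVerts B₂, ∀ y ∈ treeVerts B₁ ∩ treeVerts B₂, dist' x y ≤ L

/-- `B ∈ Γ_i`: `B` is a conjugate of `A i` whose tree contains the base point `1`. -/
def GammaMem (i : Fin r) (B : Subgroup (F n)) : Prop :=
  (∃ g : F n, B = conjSub g (A i)) ∧ (1 : F n) ∈ treeVerts B

/-- The finite set `𝒞` of words of length `L+2` whose path is contained in no tree
`T_B` with `B ∈ Γ_i`, for every `i`. -/
def Ccal (L : ℕ) : Set (F n) :=
  { w | wlen w = L + 2 ∧ ∀ (i : Fin r) (B : Subgroup (F n)), GammaMem A i B →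
      ¬ pathIn w (treeVerts B) }

/-- `F_n − 𝒜`: the words containing an element of `𝒞` as a contiguous subword. -/
def FmA (L : ℕ) : Set (F n) := { w | ∃ x ∈ Ccal A L, rword x <:+: rword w }

/-- `S_k`: words of length `k` not containing any element of `𝒞` as a subword. -/
def Sk (L k : ℕ) : Set (F n) := { w | wlen w = k ∧ w ∉ FmA A L }

end System

/-! ### The boundary of `F n` -/

/-- An infinite reduced word. -/
def IsRed {n : ℕ} (ξ : ℕ → Letter n) : Prop := ∀ i, ξ (i + 1) ≠ linv (ξ i)

/-- The Gromov boundary `∂F_n`, realized as the space of infinite reduced words,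
topologized as a subspace of the product space. -/
def Boundary (n : ℕ) : Type := { ξ : ℕ → Letter n // IsRed ξ }

instance {n : ℕ} : TopologicalSpace (Boundary n) :=
  instTopologicalSpaceSubtype

/-- The length-`m` prefix of a boundary point. -/
def bpre {n : ℕ} (ξ : Boundary n) (m : ℕ) : List (Letter n) :=
  (List.range m).map ξ.1

/-- The reduced word of `w` is a prefix of the infinite word `ξ`. -/
def wordPrefixOf {n : ℕ} (w : F n) (ξ : Boundary n) : Prop :=
  bpre ξ (wlen w) = rword w

/-- The boundary (limit set) `∂A ⊆ ∂F_n` of a subgroup `A`. -/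
def limitSet {n : ℕ} (A : Subgroup (F n)) : Set (Boundary n) :=
  { ξ | ∀ m : ℕ, ∃ a ∈ A, bpre ξ m <+: rword a }

/-- `ξ = g^{+∞}`: `ξ` is the limit of the reduced words of the powers of `g`. -/
def IsPosLimit {n : ℕ} (g : F n) (ξ : Boundary n) : Prop :=
  ∀ m : ℕ, ∃ N : ℕ, ∀ k ≥ N, bpre ξ m <+: rword (g ^ k)

/-- The number of letters cancelled when concatenating the word `l` with the
infinite reduced word `ξ`. -/
def cancelLen {n : ℕ} (l : List (Letter n)) (ξ : ℕ → Letter n) : ℕ :=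
  sSup { j | j ≤ l.length ∧ ∀ i < j, l.reverse[i]? = some (linv (ξ i)) }

/-- The sequence underlying the action of `g` on a boundary point: left multiplication
followed by cancellation. -/
def actSeq {n : ℕ} (g : F n) (ξ : ℕ → Letter n) : ℕ → Letter n :=
  fun m =>
    if h : m < (rword g).length - cancelLen (rword g) ξ then
      (rword g).get ⟨m, by omega⟩
    else ξ (m - ((rword g).length - cancelLen (rword g) ξ) + cancelLen (rword g) ξ)

/-- The action of `F n` on its boundary: left multiplication followed by cancellation.
(The sequence `actSeq g ξ.1` is always reduced, so the first branch always applies.) -/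
def bAct {n : ℕ} (g : F n) (ξ : Boundary n) : Boundary n :=
  if h : IsRed (actSeq g ξ.1) then ⟨actSeq g ξ.1, h⟩ else ξ

/-! ### The double boundary -/

/-- The diagonal action of `F n` on `Sym2 (∂F_n)`, whose restriction to the set of
non-diagonal classes is the action on the double boundary `∂²F_n`. -/
def dbAct {n : ℕ} (g : F n) : Sym2 (Boundary n) → Sym2 (Boundary n) := Sym2.map (bAct g)

/-- `∂²𝒜`: the classes `{ξ,η}` with both endpoints in `g·∂A_i = ∂(gA_ig⁻¹)` for some
`i` and `g`. -/
def dblBndA {n r : ℕ} (A : Fin r → Subgroup (F n)) : Set (Sym2 (Boundary n)) :=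
  { z | ∃ (i : Fin r) (g : F n) (ξ η : Boundary n), z = s(ξ, η) ∧
      ξ ∈ limitSet (conjSub g (A i)) ∧ η ∈ limitSet (conjSub g (A i)) }

/-- The double boundary `∂²(F_n,𝒜)` of `F n` relative to `𝒜`, as a subset of
`Sym2 (∂F_n)`: non-diagonal classes not lying in `∂²𝒜`. -/
def relSet {n r : ℕ} (A : Fin r → Subgroup (F n)) : Set (Sym2 (Boundary n)) :=
  { z | ¬ z.IsDiag } \ dblBndA A

/-- The cylinder set `C(γ_w) ⊆ ∂²F_n` of the geodesic path from `1` to `w`. -/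
def cylinder {n : ℕ} (w : F n) : Set (Sym2 (Boundary n)) :=
  { z | ∃ ξ η : Boundary n, z = s(ξ, η) ∧ ξ.1 0 ≠ η.1 0 ∧
      (wordPrefixOf w ξ ∨ wordPrefixOf w η) }

instance {n : ℕ} : MeasurableSpace (Sym2 (Boundary n)) := borel _

/-- The action of `g ∈ F n` on `∂²(F_n,𝒜)`. (The action of `F n` preserves
`∂²(F_n,𝒜)`, so the first branch always applies.) -/
def relAct {n r : ℕ} (A : Fin r → Subgroup (F n)) (g : F n) (z : ↥(relSet A)) :
    ↥(relSet A) :=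
  if h : dbAct g z.1 ∈ relSet A then ⟨dbAct g z.1, h⟩ else z

/-- The cylinder `C(γ_w)` as a subset of `∂²(F_n,𝒜)`. -/
def relCyl {n r : ℕ} (A : Fin r → Subgroup (F n)) (w : F n) : Set ↥(relSet A) :=
  Subtype.val ⁻¹' cylinder w

/-- The translated cylinder `g·C(γ_w)` as a subset of `∂²(F_n,𝒜)`. -/
def relCylG {n r : ℕ} (A : Fin r → Subgroup (F n)) (g w : F n) : Set ↥(relSet A) :=
  Subtype.val ⁻¹' (dbAct g '' cylinder w)

/-- A relative current on `(F_n,𝒜)`: an `F_n`-invariant Radon measure on the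
locally compact space `∂²(F_n,𝒜)` (finite on compacts, outer regular, inner regular
on open sets). -/
def IsRelCurrent {n r : ℕ} (A : Fin r → Subgroup (F n)) (μ : Measure ↥(relSet A)) : Prop :=
  (∀ (g : F n) (s : Set ↥(relSet A)), MeasurableSet s → μ (relAct A g ⁻¹' s) = μ s) ∧
  μ.Regular

/-- The `F_n`-orbit of a point of `Sym2 (∂F_n)`, inside `∂²(F_n,𝒜)`. -/
def orbitOf {n r : ℕ} (A : Fin r → Subgroup (F n)) (z : Sym2 (Boundary n)) :
    Set ↥(relSet A) :=
  { y | ∃ h : F n, (y : Sym2 (Boundary n)) = dbAct h z }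


lemma cycLen_le {n : ℕ} (a h : F n) : cycLen a ≤ wlen (h⁻¹ * a * h) :=
  Nat.sInf_le ⟨h, rfl⟩

lemma cycLen_conj {n : ℕ} (a g : F n) : cycLen (g⁻¹ * a * g) = cycLen a := by
  unfold cycLen
  congr 1
  ext m
  constructor
  · rintro ⟨h, rfl⟩
    exact ⟨g * h, by congr 1; group⟩
  · rintro ⟨h, rfl⟩
    exact ⟨g⁻¹ * h, by congr 1; group⟩

lemma wlen_mk_le {n : ℕ} (l : List (Letter n)) : wlen (FreeGroup.mk l : F n) ≤ l.length :=
  FreeGroup.norm_mk_le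

lemma rword_mk {n : ℕ} {l : List (Letter n)} (h : FreeGroup.IsReduced l) :
    rword (FreeGroup.mk l : F n) = l := by
  unfold rword
  rw [FreeGroup.toWord_mk, h.reduce_eq]

/-- An element of minimal length in its conjugacy class has a cyclically reduced word: otherwise
the conjugator split off by cyclic reduction would be nonempty and removing it would shorten it. -/
lemma isCyclicallyReduced_of_min {n : ℕ} {a : F n} (ha : wlen a = cycLen a) :
    FreeGroup.IsCyclicallyReduced (rword a) := by
  have hred : FreeGroup.IsReduced (rword a) := FreeGroup.isReduced_toWord
  have hdec := FreeGroup.reduceCyclically.conj_conjugator_reduceCyclically (rword a)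
  have hcyc := FreeGroup.reduceCyclically.isCyclicallyReduced hred
  generalize FreeGroup.reduceCyclically.conjugator (rword a) = u at hdec
  generalize FreeGroup.reduceCyclically (rword a) = v at hdec hcyc
  have hconj : (FreeGroup.mk u : F n)⁻¹ * a * FreeGroup.mk u = FreeGroup.mk v := by
    have : a = FreeGroup.mk (rword a) := FreeGroup.mk_toWord.symm
    rw [this, ← hdec, ← FreeGroup.mul_mk, ← FreeGroup.mul_mk, ← FreeGroup.inv_mk]
    group
  have h1 := cycLen_le a (FreeGroup.mk u)
  rw [hconj, ← ha] at h1
  have h2 := h1.trans (wlen_mk_le v)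
  have h3 : wlen a = u.length + v.length + u.length := by
    unfold wlen
    rw [← hdec]
    simp [FreeGroup.invRev_length, add_assoc]
  have hu : u = [] := List.length_eq_zero_iff.mp (by omega)
  subst hu
  rw [← hdec]
  simpa using hcyc

/-- If `q` is a prefix of a power of the word `l`, then `q⁻¹ l q` is represented by a word of
length `|l|`: both `q` and `l q` are prefixes of the next power of `l`, so `l q = q v` with
`|v| = |l|`. -/
lemma wlen_conj_prefix_le {n k : ℕ} {l q : List (Letter n)}
    (hq : q <+: (List.replicate k l).flatten) :
    wlen ((FreeGroup.mk q : F n)⁻¹ * FreeGroup.mk l * FreeGroup.mk q) ≤ l.length := by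
  have hcomm : l ++ (List.replicate k l).flatten = (List.replicate k l).flatten ++ l := by
    rw [← List.flatten_cons, ← List.replicate_succ, List.replicate_succ', List.flatten_concat]
  have h1 : l ++ q <+: (List.replicate k l).flatten ++ l := by
    rw [← hcomm]
    exact (List.prefix_append_right_inj l).mpr hq
  have h2 : q <+: (List.replicate k l).flatten ++ l := hq.trans (List.prefix_append _ _)
  obtain ⟨v, hv⟩ := List.prefix_of_prefix_length_le h2 h1 (by simp)
  have hlen : v.length = l.length := by
    have := congrArg List.length hv
    simp only [List.length_append] at this
    omega
  have : (FreeGroup.mk q : F n)⁻¹ * FreeGroup.mk l * FreeGroup.mk q = FreeGroup.mk v := by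
    rw [mul_assoc, FreeGroup.mul_mk, ← hv, ← FreeGroup.mul_mk, inv_mul_cancel_left]
  rw [this, ← hlen]
  exact wlen_mk_le v

/-- If r ≥ 1 then for every k ≥ 1 the set S_k is nonempty. -/
theorem statement_12 (n r L : ℕ) (hn : 3 ≤ n) (hr : 1 ≤ r) (A : Fin r → Subgroup (F n))
    (hsys : IsSystem A) (hmal : SystemMalnormal A) (hL : 1 ≤ L)
    (hdiam : DiamBound A L) (hbase : ∀ i, (1 : F n) ∈ treeVerts (A i)) :
    ∀ k : ℕ, 1 ≤ k → ∃ w : F n, wlen w = k ∧ w ∉ FmA A L := by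
  intro k _
  obtain ⟨a, haA, ha1, hamin⟩ := hbase ⟨0, hr⟩
  rw [inv_one, one_mul, mul_one] at hamin
  set P := (List.replicate k (rword a)).flatten with hP
  have hPred : FreeGroup.IsReduced P :=
    ((isCyclicallyReduced_of_min hamin).flatten_replicate k).isReduced
  have hpos : 1 ≤ (rword a).length := by
    rw [Nat.one_le_iff_ne_zero]
    exact fun h => ha1 (FreeGroup.norm_eq_zero.mp h)
  have hPlen : k ≤ P.length := by
    rw [hP, List.length_flatten, List.map_replicate, List.sum_replicate, smul_eq_mul]
    exact Nat.le_mul_of_pos_right k hpos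
  have hw : rword (FreeGroup.mk (P.take k) : F n) = P.take k :=
    rword_mk (hPred.infix (List.take_prefix k P).isInfix)
  refine ⟨FreeGroup.mk (P.take k), ?_, ?_⟩
  · unfold wlen
    rw [hw, List.length_take, min_eq_left hPlen]
  rintro ⟨x, ⟨-, hx⟩, s, t, hst⟩
  rw [hw] at hst
  -- Every vertex of `γ_x` lies on the axis of `s⁻¹ a s`.
  have key : ∀ m, (FreeGroup.mk ((rword x).take m) : F n) ∈
      treeVerts (conjSub (FreeGroup.mk s)⁻¹ (A ⟨0, hr⟩)) := by
    intro m
    refine ⟨(FreeGroup.mk s)⁻¹ * a * FreeGroup.mk s,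
      Subgroup.mem_map.mpr ⟨a, haA, by simp⟩, ?_, le_antisymm ?_ (cycLen_le _ _)⟩
    · intro h
      apply ha1
      rwa [mul_assoc, inv_mul_eq_one, eq_comm, mul_eq_right] at h
    · have hq : s ++ (rword x).take m <+: P := by
        refine List.IsPrefix.trans ?_ (List.take_prefix k P)
        rw [← hst, List.append_assoc]
        exact (List.prefix_append_right_inj s).mpr
          ((List.take_prefix m _).trans (List.prefix_append _ _))
      have h := wlen_conj_prefix_le (hP ▸ hq)
      have hmk : FreeGroup.mk (rword a) = a := FreeGroup.mk_toWord
      rw [hmk, ← FreeGroup.mul_mk] at h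
      rw [cycLen_conj, ← hamin]
      refine le_trans (le_of_eq ?_) h
      congr 1
      group
  exact hx ⟨0, hr⟩ _ ⟨⟨_, rfl⟩, key 0⟩ fun m _ => key m

end RelCurr
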